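/- Let ρ and H be n × n complex matrices with ρ a density matrix (positive semidefinite with trace 1) and H Hermitian, and suppose that for every n × n complex matrix A one has Re tr(ρ A† H A) ≥ Re tr(ρ A† A H) (the finite-dimensional ground state condition tr(ρ A†[H,A]) ≥ 0). Then for every finite family (A_i)_{i∈I} of n × n complex matrices satisfying Σ_{i∈I} A_i† A_i = I (Kraus operators of a completely positive trace-preserving map Φ(X) = Σ_i A_i X A_i†), the energy cannot decrease: Re tr((Σ_{i∈I} A_i ρ A_i†) H) ≥ Re tr(ρ H). -/

import Mathlib

open Matrix
open scoped ComplexOrder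

open scoped BigOperators

/-!
Pass to the Heisenberg picture: by cyclicity of the trace, the energy after the channel is the
expectation in `ρ` of `∑ i, (A i)ᴴ * H * A i`. The ground state condition for each `A i` bounds the
`i`-th term below by the expectation of `(A i)ᴴ * A i * H`, and these sum to the expectation of `H`.
-/

section Heisenberg

variable {R M : Type*} [Semiring R] [Star R] [AddCommMonoid M] [Preorder M]

/-- The ground state condition `φ (a† [h, a]) ≥ 0` for a functional `φ` and a Hamiltonian `h`,
written without subtraction. `φ` is only required to be additive, so that it may be the real part
of a complex functional. -/
def GroundStateCondition (φ : R →+ M) (h : R) : Prop :=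
  ∀ a, φ (star a * a * h) ≤ φ (star a * h * a)

theorem GroundStateCondition.apply_le_sum [AddLeftMono M] {φ : R →+ M} {h : R}
    (hφ : GroundStateCondition φ h) {ι : Type*} {s : Finset ι} {a : ι → R}
    (ha : ∑ i ∈ s, star (a i) * a i = 1) :
    φ h ≤ ∑ i ∈ s, φ (star (a i) * h * a i) :=
  calc
    φ h = φ ((∑ i ∈ s, star (a i) * a i) * h) := by rw [ha, one_mul]
    _ = ∑ i ∈ s, φ (star (a i) * a i * h) := by rw [Finset.sum_mul, map_sum]
    _ ≤ ∑ i ∈ s, φ (star (a i) * h * a i) := Finset.sum_le_sum fun i _ => hφ (a i)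

end Heisenberg

section Expectation

variable {n 𝕜 : Type*} [Fintype n] [RCLike 𝕜]

/-- The real expectation value `X ↦ Re tr(ρ X)` as an additive functional on matrices, for an
arbitrary matrix `ρ` in place of a density matrix. -/
def expectation (ρ : Matrix n n 𝕜) : Matrix n n 𝕜 →+ ℝ :=
  RCLike.re.comp ((traceAddMonoidHom n 𝕜).comp (AddMonoidHom.mulLeft ρ))

theorem expectation_apply (ρ X : Matrix n n 𝕜) :
    expectation ρ X = RCLike.re (ρ * X).trace :=
  rfl

theorem expectation_sum_conj {ι : Type*} (s : Finset ι) (A : ι → Matrix n n 𝕜)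
    (ρ X : Matrix n n 𝕜) :
    expectation (∑ i ∈ s, A i * ρ * (A i)ᴴ) X = ∑ i ∈ s, expectation ρ ((A i)ᴴ * X * A i) := by
  have trace_conj (i : ι) : (A i * ρ * (A i)ᴴ * X).trace = (ρ * ((A i)ᴴ * X * A i)).trace := by
    rw [mul_assoc, mul_assoc, trace_mul_comm, mul_assoc]
  simp only [expectation_apply, Finset.sum_mul, trace_sum, map_sum, trace_conj]

theorem cptp_does_not_decrease_energy_general [DecidableEq n] (ρ H : Matrix n n 𝕜)
    (hgs : ∀ A : Matrix n n 𝕜,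
      RCLike.re (ρ * Aᴴ * A * H).trace ≤ RCLike.re (ρ * Aᴴ * H * A).trace)
    {ι : Type*} [Fintype ι] (A : ι → Matrix n n 𝕜) (hkraus : ∑ i, (A i)ᴴ * A i = 1) :
    RCLike.re (ρ * H).trace ≤ RCLike.re ((∑ i, A i * ρ * (A i)ᴴ) * H).trace := by
  have ground : GroundStateCondition (expectation ρ) H := fun A => by
    simpa only [expectation_apply, star_eq_conjTranspose, mul_assoc] using hgs A
  calc
    expectation ρ H ≤ ∑ i, expectation ρ ((A i)ᴴ * H * A i) := ground.apply_le_sum hkraus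
    _ = expectation (∑ i, A i * ρ * (A i)ᴴ) H := (expectation_sum_conj _ A ρ H).symm

end Expectation

/-- **CPTP maps cannot decrease the energy of a ground state.**
If `ρ` is a density matrix and `H` Hermitian with the ground state property
`Re tr(ρ A† H A) ≥ Re tr(ρ A† A H)` for every matrix `A`, then for every finite
Kraus family `(Aᵢ)` with `Σᵢ Aᵢ† Aᵢ = 1` one has
`Re tr((Σᵢ Aᵢ ρ Aᵢ†) H) ≥ Re tr(ρ H)`. -/
theorem cptp_does_not_decrease_energy {n : Type*} [Fintype n] [DecidableEq n]
    (ρ H : Matrix n n ℂ) (hρ : ρ.PosSemidef) (htr : ρ.trace = 1)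
    (hH : H.IsHermitian)
    (hgs : ∀ A : Matrix n n ℂ, ((ρ * Aᴴ * A * H).trace).re ≤ ((ρ * Aᴴ * H * A).trace).re)
    {ι : Type*} [Fintype ι] (A : ι → Matrix n n ℂ)
    (hkraus : ∑ i, (A i)ᴴ * A i = 1) :
    ((ρ * H).trace).re ≤ (((∑ i, A i * ρ * (A i)ᴴ) * H).trace).re :=
  cptp_does_not_decrease_energy_general ρ H hgs A hkraus
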